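/- arXiv:1503.02429 — 3 statements merged into one kernel-verified Lean document; each statement's English description precedes it below -/
import Mathlib

section
/- Let ψ be smooth on ℝ² with |∇ψ(x)| ≤ P₁ and operator norm of the Hessian ‖Hess ψ(x)‖ ≤ P₂ for all x, for some constants P₁, P₂ ≥ 0. Let γ: ℝ × [0,T) → ℝ² evolve by ψMCF. If k_ψ(u,0) ≥ P₁ + √P₂ for every u, then k_ψ(u,t) ≥ P₁ + √P₂ for every (u,t) ∈ ℝ × [0,T); i.e., the lower bound C = P₁ + √P₂ on the ψ-curvature is preserved by the flow. -/
noncomputable section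
open Real Set

def dot2 (v w : ℝ × ℝ) : ℝ := v.1 * w.1 + v.2 * w.2

def nrm2 (v : ℝ × ℝ) : ℝ := Real.sqrt (v.1 ^ 2 + v.2 ^ 2)

def Jrot (v : ℝ × ℝ) : ℝ × ℝ := (-v.2, v.1)

structure IsClosedCurve (γ : ℝ → ℝ × ℝ) : Prop where
  smooth : ContDiff ℝ (⊤ : ℕ∞) γ
  periodic : Function.Periodic γ (2 * π)
  regular : ∀ u, deriv γ u ≠ 0

def tangentC (γ : ℝ → ℝ × ℝ) (u : ℝ) : ℝ × ℝ := (nrm2 (deriv γ u))⁻¹ • deriv γ u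

def normalC (γ : ℝ → ℝ × ℝ) (u : ℝ) : ℝ × ℝ := Jrot (tangentC γ u)

def arcDeriv {F : Type*} [NormedAddCommGroup F] [NormedSpace ℝ F]
    (γ : ℝ → ℝ × ℝ) (h : ℝ → F) (u : ℝ) : F :=
  (nrm2 (deriv γ u))⁻¹ • deriv h u

def curvature (γ : ℝ → ℝ × ℝ) (u : ℝ) : ℝ :=
  dot2 (arcDeriv γ (tangentC γ) u) (normalC γ u)

def psiCurv (ψ : ℝ × ℝ → ℝ) (γ : ℝ → ℝ × ℝ) (u : ℝ) : ℝ :=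
  curvature γ u - fderiv ℝ ψ (γ u) (normalC γ u)

def IsPsiMinimal (ψ : ℝ × ℝ → ℝ) (γ : ℝ → ℝ × ℝ) : Prop :=
  ∀ u, psiCurv ψ γ u = 0

def signedArea (γ : ℝ → ℝ × ℝ) : ℝ :=
  (1/2) * ∫ u in (0:ℝ)..(2*π), ((γ u).1 * (deriv γ u).2 - (γ u).2 * (deriv γ u).1)

def turningNumber (γ : ℝ → ℝ × ℝ) : ℝ :=
  (1/(2*π)) * ∫ u in (0:ℝ)..(2*π), curvature γ u * nrm2 (deriv γ u)

def windingNumber (γ : ℝ → ℝ × ℝ) : ℝ :=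
  (1/(2*π)) * ∫ u in (0:ℝ)..(2*π),
    ((γ u).1 * (deriv γ u).2 - (γ u).2 * (deriv γ u).1) / (nrm2 (γ u))^2

def hess2 (ψ : ℝ × ℝ → ℝ) (x v : ℝ × ℝ) : ℝ :=
  fderiv ℝ (fun y => fderiv ℝ ψ y v) x v

def SmoothFamily (γ : ℝ → ℝ → ℝ × ℝ) : Prop :=
  ContDiff ℝ (⊤ : ℕ∞) fun p : ℝ × ℝ => γ p.1 p.2


open Filter Topology ContDiff

def pD (e : ℝ × ℝ) (g : ℝ × ℝ → ℝ) (p : ℝ × ℝ) : ℝ := fderiv ℝ g p e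

lemma pD_smooth {g : ℝ × ℝ → ℝ} (hg : ContDiff ℝ (⊤ : ℕ∞) g) (e : ℝ × ℝ) :
    ContDiff ℝ (⊤ : ℕ∞) (pD e g) := by
  unfold pD
  exact (hg.fderiv_right (m := (⊤ : ℕ∞)) (by simp)).clm_apply contDiff_const

lemma pD_comm {g : ℝ × ℝ → ℝ} (hg : ContDiff ℝ (⊤ : ℕ∞) g) (e f : ℝ × ℝ) :
    pD e (pD f g) = pD f (pD e g) := by
  funext p
  have hd : DifferentiableAt ℝ (fderiv ℝ g) p :=
    ((hg.fderiv_right (m := (⊤ : ℕ∞)) (by simp)).differentiable (by simp)) p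
  have h1 : ∀ e f : ℝ × ℝ, pD e (pD f g) p = fderiv ℝ (fderiv ℝ g) p e f := by
    intro e f
    unfold pD
    rw [fderiv_clm_apply hd (by fun_prop)]
    simp
  rw [h1, h1]
  exact (hg.contDiffAt.isSymmSndFDerivAt (by
    simp only [minSmoothness_of_isRCLikeNormedField]; exact WithTop.coe_le_coe.2 (le_top (a := (2 : ℕ∞))))) e f

lemma pD_t {g : ℝ × ℝ → ℝ} (hg : ContDiff ℝ (⊤ : ℕ∞) g) (t u : ℝ) :
    HasDerivAt (fun τ => g (τ, u)) (pD (1, 0) g (t, u)) t := by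
  have h := ((hg.differentiable (by simp)) (t, u)).hasFDerivAt
  exact h.comp_hasDerivAt t ((hasDerivAt_id t).prodMk (hasDerivAt_const t u))

lemma pD_u {g : ℝ × ℝ → ℝ} (hg : ContDiff ℝ (⊤ : ℕ∞) g) (t u : ℝ) :
    HasDerivAt (fun v => g (t, v)) (pD (0, 1) g (t, u)) u := by
  have h := ((hg.differentiable (by simp)) (t, u)).hasFDerivAt
  exact h.comp_hasDerivAt u ((hasDerivAt_const u t).prodMk (hasDerivAt_id u))

def rinv (a b : ℝ) : ℝ := (Real.sqrt (a ^ 2 + b ^ 2))⁻¹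

lemma rinv_sq {a b : ℝ} (h : a ^ 2 + b ^ 2 ≠ 0) : rinv a b ^ 2 * (a ^ 2 + b ^ 2) = 1 := by
  unfold rinv
  rw [inv_pow, Real.sq_sqrt (by positivity)]
  field_simp

lemma rinv_deriv {A B : ℝ → ℝ} {a' b' x : ℝ} (hA : HasDerivAt A a' x) (hB : HasDerivAt B b' x)
    (h : A x ^ 2 + B x ^ 2 ≠ 0) :
    HasDerivAt (fun s => rinv (A s) (B s))
      (-(rinv (A x) (B x)) ^ 3 * (A x * a' + B x * b')) x := by
  unfold rinv
  have h0 : 0 < A x ^ 2 + B x ^ 2 := lt_of_le_of_ne (by positivity) (Ne.symm h)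
  have hs : Real.sqrt (A x ^ 2 + B x ^ 2) ≠ 0 := (Real.sqrt_pos.2 h0).ne'
  have := (((hA.pow 2).add (hB.pow 2)).sqrt h).inv hs
  refine this.congr_deriv ?_
  simp only [Pi.add_apply, Pi.pow_apply]
  field_simp
  ring

lemma second_deriv_nonneg {f f' : ℝ → ℝ} {x f2 : ℝ} (hf : ∀ y, HasDerivAt f (f' y) y)
    (h2 : HasDerivAt f' f2 x) (hmin : ∀ y, f x ≤ f y) : f' x = 0 ∧ 0 ≤ f2 := by
  have hl : IsLocalMin f x := Filter.Eventually.of_forall hmin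
  have h1 : f' x = 0 := hl.hasDerivAt_eq_zero (hf x)
  refine ⟨h1, ?_⟩
  by_contra hneg
  push Not at hneg
  have hd : deriv f = f' := funext fun y => (hf y).deriv
  have hmax : IsLocalMax f x := by
    apply isLocalMax_of_deriv_deriv_neg
    · rw [hd, h2.deriv]; exact hneg
    · rw [hd, h1]
    · exact (hf x).continuousAt
  have hc : f =ᶠ[𝓝 x] fun _ => f x := by
    filter_upwards [hmax, hl] with y h1 h2 using le_antisymm h1 h2
  have hc' : deriv f =ᶠ[𝓝 x] fun _ => 0 := by
    have := hc.deriv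
    simpa using this
  rw [hd] at hc'
  have := (h2.congr_of_eventuallyEq hc'.symm).unique (hasDerivAt_const x (0:ℝ))
  linarith

/-- curvature in coordinates -/
def kF (X Y : ℝ × ℝ → ℝ) (p : ℝ × ℝ) : ℝ :=
  (pD (0,1) X p * pD (0,1) (pD (0,1) Y) p - pD (0,1) Y p * pD (0,1) (pD (0,1) X) p) *
    rinv (pD (0,1) X p) (pD (0,1) Y p) ^ 3

def n1 (X Y : ℝ × ℝ → ℝ) (p : ℝ × ℝ) : ℝ :=
  -(rinv (pD (0,1) X p) (pD (0,1) Y p) * pD (0,1) Y p)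

def n2 (X Y : ℝ × ℝ → ℝ) (p : ℝ × ℝ) : ℝ :=
  rinv (pD (0,1) X p) (pD (0,1) Y p) * pD (0,1) X p

def FF (ψ X Y : ℝ × ℝ → ℝ) (p : ℝ × ℝ) : ℝ :=
  kF X Y p - (n1 X Y p * pD (1,0) ψ (X p, Y p) + n2 X Y p * pD (0,1) ψ (X p, Y p))

lemma rinv_contDiffAt {E : Type*} [NormedAddCommGroup E] [NormedSpace ℝ E] {A B : E → ℝ} {x : E}
    (hA : ContDiffAt ℝ (⊤ : ℕ∞) A x) (hB : ContDiffAt ℝ (⊤ : ℕ∞) B x)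
    (h : A x ^ 2 + B x ^ 2 ≠ 0) : ContDiffAt ℝ (⊤ : ℕ∞) (fun s => rinv (A s) (B s)) x := by
  unfold rinv
  have h0 : 0 < A x ^ 2 + B x ^ 2 := lt_of_le_of_ne (by positivity) (Ne.symm h)
  exact (((hA.pow 2).add (hB.pow 2)).sqrt h).inv (Real.sqrt_pos.2 h0).ne'

lemma kF_contDiffAt {X Y : ℝ × ℝ → ℝ} (hX : ContDiff ℝ (⊤ : ℕ∞) X) (hY : ContDiff ℝ (⊤ : ℕ∞) Y)
    {p : ℝ × ℝ} (h : pD (0,1) X p ^ 2 + pD (0,1) Y p ^ 2 ≠ 0) :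
    ContDiffAt ℝ (⊤ : ℕ∞) (kF X Y) p := by
  have a := pD_smooth hX (0,1)
  have b := pD_smooth hY (0,1)
  exact ((a.mul (pD_smooth b (0,1))).sub (b.mul (pD_smooth a (0,1)))).contDiffAt.mul
    ((rinv_contDiffAt a.contDiffAt b.contDiffAt h).pow 3)

lemma FF_contDiffAt {ψ X Y : ℝ × ℝ → ℝ} (hψ : ContDiff ℝ (⊤ : ℕ∞) ψ)
    (hX : ContDiff ℝ (⊤ : ℕ∞) X) (hY : ContDiff ℝ (⊤ : ℕ∞) Y)
    {p : ℝ × ℝ} (h : pD (0,1) X p ^ 2 + pD (0,1) Y p ^ 2 ≠ 0) :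
    ContDiffAt ℝ (⊤ : ℕ∞) (FF ψ X Y) p := by
  have a := pD_smooth hX (0,1)
  have b := pD_smooth hY (0,1)
  have r := rinv_contDiffAt a.contDiffAt b.contDiffAt h
  have hXY : ContDiff ℝ (⊤ : ℕ∞) (fun p => (X p, Y p)) := hX.prodMk hY
  exact (kF_contDiffAt hX hY h).sub
    (((r.mul b.contDiffAt).neg.mul ((pD_smooth hψ (1,0)).comp hXY).contDiffAt).add
      ((r.mul a.contDiffAt).mul ((pD_smooth hψ (0,1)).comp hXY).contDiffAt))

lemma slice_u {G : ℝ × ℝ → ℝ} {t : ℝ} (hG : ∀ u, ContDiffAt ℝ (⊤ : ℕ∞) G (t, u)) :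
    ContDiff ℝ (⊤ : ℕ∞) (fun u => G (t, u)) := by
  rw [contDiff_iff_contDiffAt]
  intro u
  exact (hG u).comp u (contDiffAt_const.prodMk contDiffAt_id)

lemma lin_pair (L : ℝ × ℝ →L[ℝ] ℝ) (x y : ℝ) : L (x, y) = x * L (1, 0) + y * L (0, 1) := by
  have : ((x, y) : ℝ × ℝ) = x • ((1, 0) : ℝ × ℝ) + y • ((0, 1) : ℝ × ℝ) := by simp
  rw [this, map_add, map_smul, map_smul]; simp

def hNN (ψ X Y : ℝ × ℝ → ℝ) (p : ℝ × ℝ) : ℝ :=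
  n1 X Y p * (n1 X Y p * pD (1,0) (pD (1,0) ψ) (X p, Y p)
      + n2 X Y p * pD (0,1) (pD (1,0) ψ) (X p, Y p))
  + n2 X Y p * (n1 X Y p * pD (1,0) (pD (0,1) ψ) (X p, Y p)
      + n2 X Y p * pD (0,1) (pD (0,1) ψ) (X p, Y p))

lemma evol {ψ X Y : ℝ × ℝ → ℝ} (hψ : ContDiff ℝ (⊤ : ℕ∞) ψ)
    (hX : ContDiff ℝ (⊤ : ℕ∞) X) (hY : ContDiff ℝ (⊤ : ℕ∞) Y) {t u₀ : ℝ}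
    (hreg : ∀ u, pD (0,1) X (t,u) ^ 2 + pD (0,1) Y (t,u) ^ 2 ≠ 0)
    (hXt : ∀ u, pD (1,0) X (t,u) = FF ψ X Y (t,u) * n1 X Y (t,u))
    (hYt : ∀ u, pD (1,0) Y (t,u) = FF ψ X Y (t,u) * n2 X Y (t,u))
    (hmin : ∀ u, FF ψ X Y (t,u₀) ≤ FF ψ X Y (t,u)) :
    ∃ d, HasDerivAt (fun τ => FF ψ X Y (τ,u₀)) d t ∧
      FF ψ X Y (t,u₀) * (kF X Y (t,u₀) ^ 2 - hNN ψ X Y (t,u₀)) ≤ d := by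
  have ha := pD_smooth hX (0,1)
  have hb := pD_smooth hY (0,1)
  have hau := pD_smooth ha (0,1)
  have hbu := pD_smooth hb (0,1)
  -- slices
  have hFs := slice_u (fun u => FF_contDiffAt hψ hX hY (hreg u))
  have hks := slice_u (fun u => kF_contDiffAt hX hY (hreg u))
  obtain ⟨f', hf'⟩ : ∃ f' : ℝ → ℝ, f' = deriv (fun u => FF ψ X Y (t,u)) := ⟨_, rfl⟩
  have hF1 : ∀ u, HasDerivAt (fun u => FF ψ X Y (t,u)) (f' u) u := by
    intro u; rw [hf']; exact ((hFs.differentiable (by simp)) u).hasDerivAt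
  have hF2 : ∃ f2, HasDerivAt f' f2 u₀ := by
    have : ContDiff ℝ (⊤ : ℕ∞) f' := by
      rw [hf']
      exact ((contDiff_infty_iff_deriv (𝕜 := ℝ)).1 hFs).2
    exact ⟨_, ((this.differentiable (by simp)) u₀).hasDerivAt⟩
  obtain ⟨f2, hF2⟩ := hF2
  obtain ⟨k1, hk1⟩ : ∃ k1, HasDerivAt (fun u => kF X Y (t,u)) k1 u₀ :=
    ⟨_, ((hks.differentiable (by simp)) u₀).hasDerivAt⟩
  obtain ⟨hf0, hf2⟩ := second_deriv_nonneg hF1 hF2 hmin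
  -- u-derivatives of normal
  have hr : ∀ u, HasDerivAt (fun u => rinv (pD (0,1) X (t,u)) (pD (0,1) Y (t,u))) _ u :=
    fun u => rinv_deriv (pD_u ha t u) (pD_u hb t u) (hreg u)
  have hn1 : ∀ u, HasDerivAt (fun u => n1 X Y (t,u)) (-(pD (0,1) X (t,u) * kF X Y (t,u))) u := by
    intro u
    refine ((hr u).mul (pD_u hb t u)).neg.congr_deriv ?_
    unfold kF
    have := rinv_sq (hreg u)
    generalize rinv (pD (0,1) X (t,u)) (pD (0,1) Y (t,u)) = r at *
    linear_combination (r * pD (0,1) (pD (0,1) Y) (t,u)) * this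
  have hn2 : ∀ u, HasDerivAt (fun u => n2 X Y (t,u)) (-(pD (0,1) Y (t,u) * kF X Y (t,u))) u := by
    intro u
    refine ((hr u).mul (pD_u ha t u)).congr_deriv ?_
    unfold kF
    have := rinv_sq (hreg u)
    generalize rinv (pD (0,1) X (t,u)) (pD (0,1) Y (t,u)) = r at *
    linear_combination (-r * pD (0,1) (pD (0,1) X) (t,u)) * this
  have hat : ∀ u, pD (1,0) (pD (0,1) X) (t,u) = f' u * n1 X Y (t,u)
      + FF ψ X Y (t,u) * (-(pD (0,1) X (t,u) * kF X Y (t,u))) := by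
    intro u
    rw [pD_comm hX]
    have h1 := pD_u (pD_smooth hX (1,0)) t u
    rw [funext hXt] at h1
    exact h1.unique ((hF1 u).mul (hn1 u))
  have hbt : ∀ u, pD (1,0) (pD (0,1) Y) (t,u) = f' u * n2 X Y (t,u)
      + FF ψ X Y (t,u) * (-(pD (0,1) Y (t,u) * kF X Y (t,u))) := by
    intro u
    rw [pD_comm hY]
    have h1 := pD_u (pD_smooth hY (1,0)) t u
    rw [funext hYt] at h1
    exact h1.unique ((hF1 u).mul (hn2 u))
  have haut : pD (1,0) (pD (0,1) (pD (0,1) X)) (t,u₀) = f2 * n1 X Y (t,u₀)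
      - FF ψ X Y (t,u₀) * (pD (0,1) (pD (0,1) X) (t,u₀) * kF X Y (t,u₀)
        + pD (0,1) X (t,u₀) * k1) := by
    rw [pD_comm ha]
    have h1 := pD_u (pD_smooth ha (1,0)) t u₀
    rw [funext hat] at h1
    rw [h1.unique ((hF2.mul (hn1 u₀)).add ((hF1 u₀).mul ((pD_u ha t u₀).mul hk1).neg))]
    rw [hf0]
    ring
  have hbut : pD (1,0) (pD (0,1) (pD (0,1) Y)) (t,u₀) = f2 * n2 X Y (t,u₀)
      - FF ψ X Y (t,u₀) * (pD (0,1) (pD (0,1) Y) (t,u₀) * kF X Y (t,u₀)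
        + pD (0,1) Y (t,u₀) * k1) := by
    rw [pD_comm hb]
    have h1 := pD_u (pD_smooth hb (1,0)) t u₀
    rw [funext hbt] at h1
    rw [h1.unique ((hF2.mul (hn2 u₀)).add ((hF1 u₀).mul ((pD_u hb t u₀).mul hk1).neg))]
    rw [hf0]
    ring
  have hat := hat u₀
  have hbt := hbt u₀
  rw [hf0] at hat hbt
  have hrt : HasDerivAt (fun τ => rinv (pD (0,1) X (τ,u₀)) (pD (0,1) Y (τ,u₀)))
      (FF ψ X Y (t,u₀) * kF X Y (t,u₀) * rinv (pD (0,1) X (t,u₀)) (pD (0,1) Y (t,u₀))) t := by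
    refine (rinv_deriv (pD_t ha t u₀) (pD_t hb t u₀) (hreg u₀)).congr_deriv ?_
    rw [hat, hbt]
    have := rinv_sq (hreg u₀)
    generalize rinv (pD (0,1) X (t,u₀)) (pD (0,1) Y (t,u₀)) = r at *
    linear_combination (r * FF ψ X Y (t,u₀) * kF X Y (t,u₀)) * this
  have hg : ∀ e, HasDerivAt (fun τ => pD e ψ (X (τ,u₀), Y (τ,u₀)))
      (pD (1,0) X (t,u₀) * pD (1,0) (pD e ψ) (X (t,u₀), Y (t,u₀))
        + pD (1,0) Y (t,u₀) * pD (0,1) (pD e ψ) (X (t,u₀), Y (t,u₀))) t := by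
    intro e
    have h := (((pD_smooth hψ e).differentiable (by simp)) (X (t,u₀), Y (t,u₀))).hasFDerivAt
    have h2 := h.comp_hasDerivAt t ((pD_t hX t u₀).prodMk (pD_t hY t u₀))
    rw [lin_pair] at h2
    exact h2
  have hmain := ((((pD_t ha t u₀).mul (pD_t hbu t u₀)).sub
    ((pD_t hb t u₀).mul (pD_t hau t u₀))).mul (hrt.pow 3)).sub
    (((hrt.mul (pD_t hb t u₀)).neg.mul (hg (1,0))).add ((hrt.mul (pD_t ha t u₀)).mul (hg (0,1))))
  refine ⟨_, hmain, ?_⟩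
  have hk : kF X Y (t,u₀) = (pD (0,1) X (t,u₀) * pD (0,1) (pD (0,1) Y) (t,u₀)
    - pD (0,1) Y (t,u₀) * pD (0,1) (pD (0,1) X) (t,u₀)) *
    rinv (pD (0,1) X (t,u₀)) (pD (0,1) Y (t,u₀)) ^ 3 := rfl
  have hn1 : n1 X Y (t,u₀) =
    -(rinv (pD (0,1) X (t,u₀)) (pD (0,1) Y (t,u₀)) * pD (0,1) Y (t,u₀)) := rfl
  have hn2 : n2 X Y (t,u₀) =
    rinv (pD (0,1) X (t,u₀)) (pD (0,1) Y (t,u₀)) * pD (0,1) X (t,u₀) := rfl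
  have hrr := rinv_sq (hreg u₀)
  simp only [Pi.mul_apply, Pi.neg_apply, Pi.sub_apply, Pi.pow_apply]
  rw [hXt, hYt, hat, hbt, haut, hbut]
  unfold hNN
  rw [hn1, hn2]
  generalize FF ψ X Y (t,u₀) = f at *
  generalize kF X Y (t,u₀) = k at *
  generalize rinv (pD (0,1) X (t,u₀)) (pD (0,1) Y (t,u₀)) = r at *
  generalize pD (0,1) X (t,u₀) = a at *
  generalize pD (0,1) Y (t,u₀) = b at *
  generalize pD (0,1) (pD (0,1) X) (t,u₀) = au at *
  generalize pD (0,1) (pD (0,1) Y) (t,u₀) = bu at *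
  generalize pD (1,0) ψ (X (t,u₀), Y (t,u₀)) = c1 at *
  generalize pD (0,1) ψ (X (t,u₀), Y (t,u₀)) = c2 at *
  generalize pD (1,0) (pD (1,0) ψ) (X (t,u₀), Y (t,u₀)) = A11 at *
  generalize pD (0,1) (pD (1,0) ψ) (X (t,u₀), Y (t,u₀)) = A21 at *
  generalize pD (1,0) (pD (0,1) ψ) (X (t,u₀), Y (t,u₀)) = A12 at *
  generalize pD (0,1) (pD (0,1) ψ) (X (t,u₀), Y (t,u₀)) = A22 at *
  have hp : 0 ≤ f2 * r ^ 2 := by positivity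
  simp only [Nat.cast_ofNat, Nat.reduceSub]
  linear_combination hp + f * k * hk - f2 * r ^ 2 * hrr

lemma nn_unit {X Y : ℝ × ℝ → ℝ} {p : ℝ × ℝ}
    (h : pD (0,1) X p ^ 2 + pD (0,1) Y p ^ 2 ≠ 0) : n1 X Y p ^ 2 + n2 X Y p ^ 2 = 1 := by
  unfold n1 n2
  have := rinv_sq h
  linear_combination this

lemma hNN_le {ψ X Y : ℝ × ℝ → ℝ} (hψ : ContDiff ℝ (⊤ : ℕ∞) ψ) {P₂ : ℝ}
    (hhess : ∀ x v w : ℝ × ℝ,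
      |fderiv ℝ (fun y => fderiv ℝ ψ y w) x v| ≤ P₂ * nrm2 v * nrm2 w)
    {p : ℝ × ℝ} (h : pD (0,1) X p ^ 2 + pD (0,1) Y p ^ 2 ≠ 0) :
    |hNN ψ X Y p| ≤ P₂ := by
  have h1 := hhess (X p, Y p) (n1 X Y p, n2 X Y p) (n1 X Y p, n2 X Y p)
  have h2 : nrm2 (n1 X Y p, n2 X Y p) = 1 := by
    simp [nrm2, nn_unit h]
  rw [h2, mul_one, mul_one] at h1
  convert h1 using 2
  have h3 : (fun y => fderiv ℝ ψ y (n1 X Y p, n2 X Y p)) =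
      fun y => n1 X Y p * pD (1,0) ψ y + n2 X Y p * pD (0,1) ψ y := by
    funext y; rw [lin_pair]; rfl
  have d1 : HasFDerivAt (pD (1,0) ψ) _ (X p, Y p) :=
    (((pD_smooth hψ (1,0)).differentiable (by simp)) (X p, Y p)).hasFDerivAt
  have d2 : HasFDerivAt (pD (0,1) ψ) _ (X p, Y p) :=
    (((pD_smooth hψ (0,1)).differentiable (by simp)) (X p, Y p)).hasFDerivAt
  have d3 : fderiv ℝ (fun y => n1 X Y p * pD (1,0) ψ y + n2 X Y p * pD (0,1) ψ y) (X p, Y p) = _ :=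
    ((d1.const_mul (n1 X Y p)).add (d2.const_mul (n2 X Y p))).fderiv
  rw [h3, d3]
  simp only [ContinuousLinearMap.add_apply, ContinuousLinearMap.smul_apply, smul_eq_mul]
  rw [lin_pair, lin_pair (fderiv ℝ (pD (0,1) ψ) (X p, Y p))]
  rfl

lemma grad_le {ψ X Y : ℝ × ℝ → ℝ} {P₁ : ℝ}
    (hgrad : ∀ x : ℝ × ℝ,
      nrm2 (fderiv ℝ ψ x (1, 0), fderiv ℝ ψ x (0, 1)) ≤ P₁)
    {p : ℝ × ℝ} (h : pD (0,1) X p ^ 2 + pD (0,1) Y p ^ 2 ≠ 0) :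
    FF ψ X Y p - P₁ ≤ kF X Y p := by
  have h1 : Real.sqrt (pD (1,0) ψ (X p, Y p) ^ 2 + pD (0,1) ψ (X p, Y p) ^ 2) ≤ P₁ :=
    hgrad (X p, Y p)
  have hu := nn_unit h
  unfold FF
  generalize n1 X Y p = a at *
  generalize n2 X Y p = b at *
  generalize pD (1,0) ψ (X p, Y p) = c at *
  generalize pD (0,1) ψ (X p, Y p) = d at *
  have : -(a * c + b * d) ≤ Real.sqrt (c ^ 2 + d ^ 2) := by
    apply Real.le_sqrt_of_sq_le
    nlinarith [sq_nonneg (a * d - b * c)]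
  linarith

lemma bridge_deriv {γ : ℝ → ℝ → ℝ × ℝ} {X Y : ℝ × ℝ → ℝ}
    (hX : ContDiff ℝ (⊤ : ℕ∞) X) (hY : ContDiff ℝ (⊤ : ℕ∞) Y)
    (hγ : ∀ t u, γ t u = (X (t,u), Y (t,u))) (t u : ℝ) :
    deriv (γ t) u = (pD (0,1) X (t,u), pD (0,1) Y (t,u)) := by
  rw [show γ t = fun u => (X (t,u), Y (t,u)) from funext (hγ t)]
  exact ((pD_u hX t u).prodMk (pD_u hY t u)).deriv

lemma bridge_normal {γ : ℝ → ℝ → ℝ × ℝ} {X Y : ℝ × ℝ → ℝ}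
    (hX : ContDiff ℝ (⊤ : ℕ∞) X) (hY : ContDiff ℝ (⊤ : ℕ∞) Y)
    (hγ : ∀ t u, γ t u = (X (t,u), Y (t,u))) (t u : ℝ) :
    normalC (γ t) u = (n1 X Y (t,u), n2 X Y (t,u)) := by
  unfold normalC tangentC Jrot
  rw [bridge_deriv hX hY hγ]
  rfl

lemma bridge {ψ : ℝ × ℝ → ℝ} {γ : ℝ → ℝ → ℝ × ℝ} {X Y : ℝ × ℝ → ℝ}
    (hX : ContDiff ℝ (⊤ : ℕ∞) X) (hY : ContDiff ℝ (⊤ : ℕ∞) Y)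
    (hγ : ∀ t u, γ t u = (X (t,u), Y (t,u))) {t u : ℝ}
    (hreg : pD (0,1) X (t,u) ^ 2 + pD (0,1) Y (t,u) ^ 2 ≠ 0) :
    psiCurv ψ (γ t) u = FF ψ X Y (t,u) := by
  have ha := pD_smooth hX (0,1)
  have hb := pD_smooth hY (0,1)
  have hr := rinv_deriv (pD_u ha t u) (pD_u hb t u) hreg
  have hT : tangentC (γ t) = fun u => (rinv (pD (0,1) X (t,u)) (pD (0,1) Y (t,u)) * pD (0,1) X (t,u),
      rinv (pD (0,1) X (t,u)) (pD (0,1) Y (t,u)) * pD (0,1) Y (t,u)) := by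
    funext u
    unfold tangentC
    rw [bridge_deriv hX hY hγ]
    rfl
  unfold psiCurv curvature arcDeriv
  rw [bridge_normal hX hY hγ, hT, lin_pair, hγ, bridge_deriv hX hY hγ]
  have hd : deriv (fun u => (rinv (pD (0,1) X (t,u)) (pD (0,1) Y (t,u)) * pD (0,1) X (t,u),
      rinv (pD (0,1) X (t,u)) (pD (0,1) Y (t,u)) * pD (0,1) Y (t,u))) u = _ :=
    ((hr.mul (pD_u ha t u)).prodMk (hr.mul (pD_u hb t u))).deriv
  rw [hd]
  have hn : (nrm2 (pD (0,1) X (t,u), pD (0,1) Y (t,u)))⁻¹ =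
    rinv (pD (0,1) X (t,u)) (pD (0,1) Y (t,u)) := rfl
  rw [hn]
  unfold FF kF dot2 n1 n2
  simp only [Prod.smul_fst, Prod.smul_snd, smul_eq_mul]
  unfold pD
  ring

lemma time_deriv_nonpos {f : ℝ → ℝ} {d t₀ : ℝ} (hf : HasDerivAt f d t₀) (h0 : 0 < t₀)
    (hpos : ∀ t, 0 ≤ t → t < t₀ → 0 ≤ f t) (hz : f t₀ ≤ 0) : d ≤ 0 := by
  have h1 := hf.hasDerivWithinAt (s := Iio t₀)
  rw [hasDerivWithinAt_iff_tendsto_slope' (by simp)] at h1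
  refine le_of_tendsto h1 ?_
  have : Ioo 0 t₀ ∈ 𝓝[<] t₀ := Ioo_mem_nhdsLT h0
  filter_upwards [this] with t ht
  rw [slope_def_field]
  have := hpos t ht.1.le ht.2
  exact div_nonpos_of_nonneg_of_nonpos (by linarith) (by linarith [ht.2])

/-- a lower bound k_ψ ≥ P₁ + √P₂ on the ψ-curvature is preserved
under ψMCF, for ψ smooth on ℝ² with |∇ψ| ≤ P₁ and ‖Hess ψ‖ ≤ P₂. -/
theorem psiCurvature_lower_bound_preserved
    (ψ : ℝ × ℝ → ℝ) (hψ : ContDiff ℝ (⊤ : ℕ∞) ψ)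
    (P₁ P₂ : ℝ) (hP₁ : 0 ≤ P₁) (hP₂ : 0 ≤ P₂)
    (hgrad : ∀ x : ℝ × ℝ,
      nrm2 (fderiv ℝ ψ x (1, 0), fderiv ℝ ψ x (0, 1)) ≤ P₁)
    (hhess : ∀ x v w : ℝ × ℝ,
      |fderiv ℝ (fun y => fderiv ℝ ψ y w) x v| ≤ P₂ * nrm2 v * nrm2 w)
    (T : ℝ) (hT : 0 < T) (γ : ℝ → ℝ → ℝ × ℝ)
    (hfam : SmoothFamily γ)
    (hclosed : ∀ t ∈ Set.Ico (0:ℝ) T, IsClosedCurve (γ t))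
    (hflow : ∀ t ∈ Set.Ico (0:ℝ) T, ∀ u : ℝ,
      deriv (fun τ => γ τ u) t = psiCurv ψ (γ t) u • normalC (γ t) u)
    (hinit : ∀ u : ℝ, P₁ + Real.sqrt P₂ ≤ psiCurv ψ (γ 0) u) :
    ∀ t ∈ Set.Ico (0:ℝ) T, ∀ u : ℝ,
      P₁ + Real.sqrt P₂ ≤ psiCurv ψ (γ t) u := by
  obtain ⟨X, hXd⟩ : ∃ X : ℝ × ℝ → ℝ, X = fun p => (γ p.1 p.2).1 := ⟨_, rfl⟩
  obtain ⟨Y, hYd⟩ : ∃ Y : ℝ × ℝ → ℝ, Y = fun p => (γ p.1 p.2).2 := ⟨_, rfl⟩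
  have hX : ContDiff ℝ (⊤ : ℕ∞) X := by rw [hXd]; exact contDiff_fst.comp hfam
  have hY : ContDiff ℝ (⊤ : ℕ∞) Y := by rw [hYd]; exact contDiff_snd.comp hfam
  have hγ : ∀ t u, γ t u = (X (t,u), Y (t,u)) := by intro t u; rw [hXd, hYd]
  have hreg : ∀ t ∈ Set.Ico (0:ℝ) T, ∀ u, pD (0,1) X (t,u) ^ 2 + pD (0,1) Y (t,u) ^ 2 ≠ 0 := by
    intro t ht u h0
    apply (hclosed t ht).regular u
    rw [bridge_deriv hX hY hγ]
    have h1 : pD (0,1) X (t,u) = 0 := by nlinarith [sq_nonneg (pD (0,1) X (t,u)), sq_nonneg (pD (0,1) Y (t,u))]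
    have h2 : pD (0,1) Y (t,u) = 0 := by nlinarith [sq_nonneg (pD (0,1) X (t,u)), sq_nonneg (pD (0,1) Y (t,u))]
    rw [h1, h2]; rfl
  have hbr : ∀ t ∈ Set.Ico (0:ℝ) T, ∀ u, psiCurv ψ (γ t) u = FF ψ X Y (t,u) :=
    fun t ht u => bridge hX hY hγ (hreg t ht u)
  have hflow' : ∀ t ∈ Set.Ico (0:ℝ) T, ∀ u, pD (1,0) X (t,u) = FF ψ X Y (t,u) * n1 X Y (t,u) ∧
      pD (1,0) Y (t,u) = FF ψ X Y (t,u) * n2 X Y (t,u) := by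
    intro t ht u
    have h := hflow t ht u
    rw [hbr t ht, bridge_normal hX hY hγ] at h
    rw [show (fun τ => γ τ u) = fun τ => (X (τ,u), Y (τ,u)) from funext fun τ => hγ τ u,
      ((pD_t hX t u).prodMk (pD_t hY t u)).deriv] at h
    exact ⟨congrArg Prod.fst h, congrArg Prod.snd h⟩
  have hper : ∀ t ∈ Set.Ico (0:ℝ) T, Function.Periodic (fun u => FF ψ X Y (t,u)) (2 * π) := by
    intro t ht u
    have hp := (hclosed t ht).periodic
    have hD : ∀ v, deriv (γ t) (v + 2 * π) = deriv (γ t) v := by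
      intro v
      rw [← deriv_comp_add_const]
      congr 1
      funext w
      exact hp w
    have hTp : ∀ v, tangentC (γ t) (v + 2 * π) = tangentC (γ t) v := by
      intro v; unfold tangentC; rw [hD]
    have hDT : deriv (tangentC (γ t)) (u + 2 * π) = deriv (tangentC (γ t)) u := by
      rw [← deriv_comp_add_const]
      congr 1
      funext w
      exact hTp w
    change FF ψ X Y (t, u + 2 * π) = FF ψ X Y (t, u)
    rw [← hbr t ht, ← hbr t ht]
    unfold psiCurv curvature arcDeriv normalC
    rw [hD, hTp, hDT, hp u]
  intro t₁ ht₁ u₁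
  rw [hbr t₁ ht₁]
  have hsub : ∀ t ∈ Icc 0 t₁, t ∈ Ico 0 T := fun t ht => ⟨ht.1, lt_of_le_of_lt ht.2 ht₁.2⟩
  have hcomp : IsCompact (Icc (0:ℝ) t₁ ×ˢ Icc (0:ℝ) (2 * π)) := isCompact_Icc.prod isCompact_Icc
  have hkc : ContinuousOn (kF X Y) (Icc (0:ℝ) t₁ ×ˢ Icc (0:ℝ) (2 * π)) := fun p hp =>
    (kF_contDiffAt hX hY (hreg p.1 (hsub _ hp.1) p.2)).continuousAt.continuousWithinAt
  have hFc : ContinuousOn (FF ψ X Y) (Icc (0:ℝ) t₁ ×ˢ Icc (0:ℝ) (2 * π)) := fun p hp =>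
    (FF_contDiffAt hψ hX hY (hreg p.1 (hsub _ hp.1) p.2)).continuousAt.continuousWithinAt
  obtain ⟨B, hB⟩ := hcomp.exists_bound_of_continuousOn hkc
  obtain ⟨s, hs⟩ : ∃ s, s = Real.sqrt P₂ := ⟨_, rfl⟩
  have hs0 : 0 ≤ s := by rw [hs]; exact Real.sqrt_nonneg _
  have hs2 : s ^ 2 = P₂ := by rw [hs]; exact Real.sq_sqrt hP₂
  rw [← hs] at hinit ⊢
  obtain ⟨C, hC⟩ : ∃ C, C = P₁ + s := ⟨_, rfl⟩
  have hC0 : 0 ≤ C := by rw [hC]; positivity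
  rw [← hC] at hinit ⊢
  obtain ⟨K, hK⟩ : ∃ K, K = 2 * C * s + (B ^ 2 + P₂) + 1 := ⟨_, rfl⟩
  have hπ := Real.pi_pos
  -- reduction to the fundamental domain
  have hred : ∀ t ∈ Ico 0 T, ∀ u, ∃ v ∈ Icc (0:ℝ) (2 * π), FF ψ X Y (t,u) = FF ψ X Y (t,v) := by
    intro t ht u
    obtain ⟨v, hv, h⟩ := (hper t ht).exists_mem_Ico₀ (by positivity) u
    exact ⟨v, ⟨hv.1, hv.2.le⟩, h⟩
  have key : ∀ ε > 0, ∀ t ∈ Icc 0 t₁, ∀ u ∈ Icc (0:ℝ) (2 * π),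
      0 < FF ψ X Y (t,u) - C + ε * Real.exp (K * t) := by
    intro ε hε
    by_contra hcon
    push Not at hcon
    obtain ⟨t', ht', u', hu', hw'⟩ := hcon
    obtain ⟨w, hwd⟩ : ∃ w : ℝ × ℝ → ℝ, w = fun p => FF ψ X Y p - C + ε * Real.exp (K * p.1) :=
      ⟨_, rfl⟩
    have hwc : ContinuousOn w (Icc (0:ℝ) t₁ ×ˢ Icc (0:ℝ) (2 * π)) := by
      rw [hwd]
      exact (hFc.sub continuousOn_const).add (by fun_prop)
    have hScl : IsCompact ((Icc (0:ℝ) t₁ ×ˢ Icc (0:ℝ) (2 * π)) ∩ w ⁻¹' Iic 0) :=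
      hcomp.of_isClosed_subset (hwc.preimage_isClosed_of_isClosed hcomp.isClosed isClosed_Iic)
        inter_subset_left
    have hne : ((Icc (0:ℝ) t₁ ×ˢ Icc (0:ℝ) (2 * π)) ∩ w ⁻¹' Iic 0).Nonempty :=
      ⟨(t', u'), ⟨ht', hu'⟩, by rw [hwd]; exact hw'⟩
    obtain ⟨⟨t₀, u₀⟩, ⟨⟨ht₀, hu₀⟩, hw₀⟩, hmin⟩ :=
      hScl.exists_isMinOn hne (continuous_fst.continuousOn)
    simp only at ht₀ hu₀
    have hw₀ : w (t₀, u₀) ≤ 0 := hw₀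
    have hT₀ := hsub t₀ ht₀
    have hbefore : ∀ t, 0 ≤ t → t < t₀ → ∀ u ∈ Icc (0:ℝ) (2 * π), 0 < w (t, u) := by
      intro t h0 hlt u hu
      by_contra hle
      push Not at hle
      have : t₀ ≤ t := hmin (a := (t, u)) ⟨⟨⟨h0, hlt.le.trans ht₀.2⟩, hu⟩, hle⟩
      linarith
    have hpos : 0 < t₀ := by
      rcases ht₀.1.lt_or_eq with h | h
      · exact h
      · exfalso
        have h1 := hinit u₀
        have hT0 : (0:ℝ) ∈ Ico 0 T := ⟨le_rfl, hT⟩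
        rw [hbr 0 hT0] at h1
        rw [hwd, ← h] at hw₀
        simp at hw₀
        linarith
    have hwt : ∀ u, ContinuousAt (fun t => w (t,u)) t₀ := by
      intro u
      rw [hwd]
      have h1 := (FF_contDiffAt hψ hX hY (hreg t₀ hT₀ u)).continuousAt
      have h2 : ContinuousAt (fun t : ℝ => FF ψ X Y (t,u)) t₀ :=
        h1.comp (f := fun t : ℝ => (t,u)) (by fun_prop)
      exact (h2.sub continuousAt_const).add (by fun_prop)
    have hat : ∀ u ∈ Icc (0:ℝ) (2 * π), 0 ≤ w (t₀, u) := by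
      intro u hu
      have h1 : Tendsto (fun t => w (t,u)) (𝓝[<] t₀) (𝓝 (w (t₀,u))) :=
        (hwt u).tendsto.mono_left nhdsWithin_le_nhds
      refine ge_of_tendsto h1 ?_
      filter_upwards [Ioo_mem_nhdsLT hpos] with t ht
      exact (hbefore t ht.1.le ht.2 u hu).le
    have hz : w (t₀, u₀) = 0 := le_antisymm hw₀ (hat u₀ hu₀)
    have hFmin : ∀ u, FF ψ X Y (t₀,u₀) ≤ FF ψ X Y (t₀,u) := by
      intro u
      obtain ⟨v, hv, h⟩ := hred t₀ hT₀ u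
      rw [h]
      have h1 := hat v hv
      rw [hwd] at h1 hz
      simp only at h1 hz
      linarith
    obtain ⟨d, hd, hdge⟩ := evol hψ hX hY (hreg t₀ hT₀) (fun u => (hflow' t₀ hT₀ u).1)
      (fun u => (hflow' t₀ hT₀ u).2) hFmin
    obtain ⟨δ, hδ⟩ : ∃ δ, δ = ε * Real.exp (K * t₀) := ⟨_, rfl⟩
    have hδ0 : 0 < δ := by rw [hδ]; positivity
    have hwder : HasDerivAt (fun t => w (t,u₀)) (d + K * δ) t₀ := by
      rw [hwd]
      have h1 : HasDerivAt (fun t : ℝ => ε * Real.exp (K * t)) (K * δ) t₀ := by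
        refine ((((hasDerivAt_id t₀).const_mul K).exp).const_mul ε).congr_deriv ?_
        rw [hδ]; simp; ring
      exact (hd.sub_const C).add h1
    have hnp := time_deriv_nonpos hwder hpos (fun t h0 hlt => (hbefore t h0 hlt u₀ hu₀).le) hw₀
    have hf : FF ψ X Y (t₀,u₀) = C - δ := by
      rw [hwd] at hz; simp only at hz; rw [hδ]; linarith
    have hH := abs_le.1 (hNN_le hψ hhess (hreg t₀ hT₀ u₀))
    have hg := grad_le (ψ := ψ) hgrad (hreg t₀ hT₀ u₀)
    have hkB := hB (t₀,u₀) ⟨ht₀, hu₀⟩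
    rw [Real.norm_eq_abs] at hkB
    have hkB2 : kF X Y (t₀,u₀) ^ 2 ≤ B ^ 2 := sq_le_sq' (abs_le.1 hkB).1 (abs_le.1 hkB).2
    rw [hf] at hg hdge
    generalize kF X Y (t₀,u₀) = k at *
    generalize hNN ψ X Y (t₀,u₀) = H at *
    have hks : s - δ ≤ k := by linarith
    have hG1 : -(2 * s * δ) ≤ k ^ 2 - H := by
      nlinarith [sq_nonneg (k - s), mul_le_mul_of_nonneg_left hks hs0]
    have hG2 : k ^ 2 - H ≤ B ^ 2 + P₂ := by linarith
    have e1 := mul_le_mul_of_nonneg_left hG1 hC0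
    have e2 := mul_le_mul_of_nonneg_left hG2 hδ0.le
    rw [hK] at hnp
    nlinarith
  obtain ⟨v, hv, h⟩ := hred t₁ ht₁ u₁
  rw [h]
  have hlim : ∀ η > 0, C ≤ FF ψ X Y (t₁,v) + η := by
    intro η hη
    have h1 := key (η * Real.exp (-(K * t₁))) (by positivity) t₁ ⟨ht₁.1, le_rfl⟩ v hv
    rw [mul_assoc, ← Real.exp_add] at h1
    simp at h1
    linarith
  exact le_of_forall_pos_le_add hlim
end
end

section
/- Let ε ∈ {−1, 1}, μ > 0, and ψ(x) = ε·μ²|x|²/2 on ℝ². Let γ: ℝ × [0,T) → ℝ² be a smooth family of closed plane curves, define τ(t̂) = (1/(2εμ²))·ln(1 + 2εμ²·t̂) and T̂ = (e^{2εμ²T} − 1)/(2εμ²), and set γ̂(u,t̂) = e^{εμ²·τ(t̂)}·γ(u, τ(t̂)) for t̂ ∈ [0, T̂). Then γ satisfies the normal ψMCF equation ⟨∂_t γ, N⟩ = k_ψ on ℝ × [0,T) if and only if γ̂ satisfies the normal curve shortening flow equation ⟨∂_{t̂} γ̂, N̂⟩ = k̂ on ℝ × [0,T̂), where N̂ and k̂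 are the unit normal and curvature of γ̂(·,t̂). (When ε = −1 one has t̂ < 1/(2μ²).) -/
noncomputable section
open Real Set

lemma aux_nrm2_smul (a : ℝ) (ha : 0 < a) (v : ℝ × ℝ) : nrm2 (a • v) = a * nrm2 v := by
  unfold nrm2
  have : (a • v).1 ^ 2 + (a • v).2 ^ 2 = a ^ 2 * (v.1 ^ 2 + v.2 ^ 2) := by
    simp only [Prod.smul_fst, Prod.smul_snd, smul_eq_mul]; ring
  rw [this, Real.sqrt_mul (sq_nonneg a), Real.sqrt_sq ha.le]

lemma aux_deriv_smul (a : ℝ) (g : ℝ → ℝ × ℝ) (u : ℝ) :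
    deriv (fun x => a • g x) u = a • deriv g u := by
  simpa using deriv_fun_const_smul_field (x := u) a g

lemma aux_tangent (a : ℝ) (ha : 0 < a) (g : ℝ → ℝ × ℝ) :
    tangentC (fun x => a • g x) = tangentC g := by
  funext u
  unfold tangentC
  rw [aux_deriv_smul, aux_nrm2_smul a ha, smul_smul]
  congr 1
  rw [mul_inv, mul_comm a⁻¹, mul_assoc, inv_mul_cancel₀ ha.ne', mul_one]

lemma aux_normal (a : ℝ) (ha : 0 < a) (g : ℝ → ℝ × ℝ) :
    normalC (fun x => a • g x) = normalC g := by
  funext u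
  unfold normalC
  rw [aux_tangent a ha]

lemma aux_curv (a : ℝ) (ha : 0 < a) (g : ℝ → ℝ × ℝ) (u : ℝ) :
    curvature (fun x => a • g x) u = a⁻¹ * curvature g u := by
  unfold curvature arcDeriv
  rw [aux_normal a ha, aux_tangent a ha, aux_deriv_smul, aux_nrm2_smul a ha, mul_inv]
  simp only [dot2, Prod.smul_fst, Prod.smul_snd, smul_eq_mul]
  ring

lemma aux_fderiv (c : ℝ) (x v : ℝ × ℝ) :
    fderiv ℝ (fun x : ℝ × ℝ => c * (nrm2 x) ^ 2 / 2) x v = c * dot2 x v := by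
  have h : (fun x : ℝ × ℝ => c * (nrm2 x) ^ 2 / 2)
      = fun x : ℝ × ℝ => (c / 2) * (x.1 ^ 2 + x.2 ^ 2) := by
    funext y
    unfold nrm2
    rw [Real.sq_sqrt (by positivity)]; ring
  rw [h]
  have h1 : HasFDerivAt (fun x : ℝ × ℝ => x.1) (ContinuousLinearMap.fst ℝ ℝ ℝ) x := hasFDerivAt_fst
  have h2 : HasFDerivAt (fun x : ℝ × ℝ => x.2) (ContinuousLinearMap.snd ℝ ℝ ℝ) x := hasFDerivAt_snd
  have h3 := ((h1.pow 2).fun_add (h2.pow 2)).const_mul (c / 2)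
  rw [HasFDerivAt.fderiv h3]
  simp [dot2]
  ring

lemma aux_point (c : ℝ) (hc : c ≠ 0) (γ : ℝ → ℝ → ℝ × ℝ) (hfam : SmoothFamily γ)
    (τ : ℝ → ℝ) (hτ : ∀ th : ℝ, τ th = (1 / (2 * c)) * Real.log (1 + 2 * c * th))
    (γhat : ℝ → ℝ → ℝ × ℝ)
    (hγhat : ∀ th u : ℝ, γhat th u = Real.exp (c * τ th) • γ (τ th) u)
    (th : ℝ) (hpos : 0 < 1 + 2 * c * th) (u : ℝ) :
    (dot2 (deriv (fun τ' => γ τ' u) (τ th)) (normalC (γ (τ th)) u)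
        = psiCurv (fun x => c * (nrm2 x) ^ 2 / 2) (γ (τ th)) u)
    ↔ dot2 (deriv (fun σ => γhat σ u) th) (normalC (γhat th) u)
          = curvature (γhat th) u := by
  set a := Real.exp (c * τ th) with ha
  have hapos : 0 < a := Real.exp_pos _
  have ha2 : a * a = 1 + 2 * c * th := by
    rw [ha, ← Real.exp_add, hτ, ← Real.exp_log hpos]
    congr 1
    rw [Real.exp_log hpos]
    field_simp
    ring
  have hτd : HasDerivAt τ (a * a)⁻¹ th := by
    have h1 : HasDerivAt (fun x : ℝ => 1 + 2 * c * x) (2 * c) th := by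
      simpa using ((hasDerivAt_id th).const_mul (2 * c)).const_add 1
    have h2 := (h1.log hpos.ne').const_mul (1 / (2 * c))
    have h3 : τ = fun x => (1 / (2 * c)) * Real.log (1 + 2 * c * x) := funext hτ
    rw [h3, ha2]
    refine h2.congr_deriv ?_
    rw [one_div, ← mul_div_assoc, inv_mul_cancel₀ (by simpa using hc), one_div]
  have had : HasDerivAt (fun x => Real.exp (c * τ x)) (a * (c * (a * a)⁻¹)) th :=
    (hτd.const_mul c).exp
  have hγ : Differentiable ℝ (fun t => γ t u) := by
    have h1 : ContDiff ℝ (⊤ : ℕ∞) (fun t : ℝ => γ t u) :=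
      hfam.comp (contDiff_id.prodMk contDiff_const)
    exact h1.differentiable (by simp)
  have hγd : HasDerivAt (fun x => γ (τ x) u) ((a * a)⁻¹ • deriv (fun t => γ t u) (τ th)) th :=
    HasDerivAt.scomp th (hγ (τ th)).hasDerivAt hτd
  have hd : deriv (fun σ => γhat σ u) th
      = a⁻¹ • (deriv (fun t => γ t u) (τ th) + c • γ (τ th) u) := by
    have h1 : (fun σ => γhat σ u) = fun σ => Real.exp (c * τ σ) • γ (τ σ) u :=
      funext fun σ => hγhat σ u
    rw [h1]
    have h2 := (had.fun_smul hγd).deriv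
    rw [h2, ← ha, smul_smul, smul_add, smul_smul]
    congr 2 <;> field_simp
  have hh : γhat th = fun x => a • γ (τ th) x := funext fun x => hγhat th x
  rw [hd, hh, aux_normal a hapos, aux_curv a hapos, psiCurv, aux_fderiv]
  have hd2 : ∀ v w n : ℝ × ℝ, dot2 (a⁻¹ • (v + c • w)) n = a⁻¹ * (dot2 v n + c * dot2 w n) := by
    intro v w n
    simp only [dot2, Prod.smul_fst, Prod.smul_snd, smul_eq_mul, Prod.fst_add, Prod.snd_add]
    ring
  rw [hd2, mul_right_inj' (inv_ne_zero hapos.ne'), eq_sub_iff_add_eq]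

/-- equivalence between ψMCF for the (anti-)Gaussian density
ψ(x) = ε μ²|x|²/2 and the curve shortening flow of the rescaled family
γ̂(u,t̂) = e^{εμ²τ(t̂)} γ(u, τ(t̂)), where τ(t̂) = (1/(2εμ²)) ln(1 + 2εμ² t̂). -/
theorem gaussian_psiMCF_equiv_MCF
    (ε μ T : ℝ) (hε : ε = 1 ∨ ε = -1) (hμ : 0 < μ) (hT : 0 < T)
    (γ : ℝ → ℝ → ℝ × ℝ)
    (hfam : SmoothFamily γ)
    (hclosed : ∀ t ∈ Set.Ico (0:ℝ) T, IsClosedCurve (γ t))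
    (τ : ℝ → ℝ)
    (hτ : ∀ th : ℝ, τ th = (1 / (2 * ε * μ ^ 2)) * Real.log (1 + 2 * ε * μ ^ 2 * th))
    (Th : ℝ) (hTh : Th = (Real.exp (2 * ε * μ ^ 2 * T) - 1) / (2 * ε * μ ^ 2))
    (γhat : ℝ → ℝ → ℝ × ℝ)
    (hγhat : ∀ th u : ℝ, γhat th u = Real.exp (ε * μ ^ 2 * τ th) • γ (τ th) u) :
    (∀ t ∈ Set.Ico (0:ℝ) T, ∀ u : ℝ,
      dot2 (deriv (fun τ' => γ τ' u) t) (normalC (γ t) u)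
        = psiCurv (fun x => ε * μ ^ 2 * (nrm2 x) ^ 2 / 2) (γ t) u)
    ↔ (∀ th ∈ Set.Ico (0:ℝ) Th, ∀ u : ℝ,
        dot2 (deriv (fun σ => γhat σ u) th) (normalC (γhat th) u)
          = curvature (γhat th) u) := by
  obtain ⟨c, hcdef⟩ : ∃ c, c = ε * μ ^ 2 := ⟨_, rfl⟩
  have hc : c ≠ 0 := by
    rw [hcdef]
    rcases hε with h | h <;> rw [h] <;> simp [hμ.ne']
  have e2 : 2 * ε * μ ^ 2 = 2 * c := by rw [hcdef]; ring
  simp only [e2, ← hcdef] at *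
  have key := aux_point c hc γ hfam τ hτ γhat hγhat
  -- monotone change of variables
  have hfor : ∀ t, τ ((Real.exp (2 * c * t) - 1) / (2 * c)) = t := by
    intro t
    rw [hτ, mul_div_cancel₀ _ (by simpa using hc), add_sub_cancel, Real.log_exp]
    field_simp
  have hposE : ∀ t, 0 < 1 + 2 * c * ((Real.exp (2 * c * t) - 1) / (2 * c)) := by
    intro t
    rw [mul_div_cancel₀ _ (by simpa using hc), add_sub_cancel]
    exact Real.exp_pos _
  have hmono : StrictMono (fun t => (Real.exp (2 * c * t) - 1) / (2 * c)) := by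
    intro x y hxy
    rcases lt_or_gt_of_ne hc with h | h
    · have : Real.exp (2 * c * y) < Real.exp (2 * c * x) := Real.exp_lt_exp.2 (by nlinarith)
      exact (div_lt_div_right_of_neg (by linarith)).2 (by linarith)
    · have : Real.exp (2 * c * x) < Real.exp (2 * c * y) := Real.exp_lt_exp.2 (by nlinarith)
      exact (div_lt_div_iff_of_pos_right (by linarith)).2 (by linarith)
  have h0 : (Real.exp (2 * c * 0) - 1) / (2 * c) = 0 := by simp
  constructor
  · intro H th hth u
    have hpos : 0 < 1 + 2 * c * th := by
      rcases lt_or_gt_of_ne hc with h | h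
      · have h1 := hth.2
        rw [hTh, lt_div_iff_of_neg (by linarith)] at h1
        have := Real.exp_pos (2 * c * T)
        linarith
      · have := mul_nonneg h.le hth.1
        linarith
    have hinv : (Real.exp (2 * c * τ th) - 1) / (2 * c) = th := by
      have : 2 * c * τ th = Real.log (1 + 2 * c * th) := by
        rw [hτ]; field_simp
      rw [this, Real.exp_log hpos]
      field_simp
      ring
    refine (key th hpos u).1 (H (τ th) ⟨?_, ?_⟩ u)
    · refine hmono.le_iff_le.1 ?_
      simp only [hinv, h0]
      exact hth.1
    · refine hmono.lt_iff_lt.1 ?_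
      simp only [hinv, ← hTh]
      exact hth.2
  · intro H t ht u
    have := (key _ (hposE t) u).2 (H _ ⟨?_, ?_⟩ u)
    · rwa [hfor] at this
    · rw [← h0]; exact hmono.monotone ht.1
    · rw [hTh]; exact hmono ht.2
end
end

section
/- Let P, E, C > 0 and let f, w: ℝ → ℝ be smooth P-periodic functions with w(s) ≥ E for all s. If there exists s₀ with |f(s₀)| ≤ C, then for every s one has f(s)² ≤ 2C² + (2/E²)·(∫₀^P w)·(∫₀^P (f′)² w). (This is the weighted interpolation inequality used to bound the maximum of the ψ-curvature by its weighted L² energy along the flow.) -/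
noncomputable section
open Real Set

/-- weighted interpolation inequality for periodic functions:
if |f(s₀)| ≤ C somewhere and w ≥ E > 0, then
f(s)² ≤ 2C² + (2/E²)(∫₀^P w)(∫₀^P (f')² w) for every s. -/
theorem periodic_weighted_interpolation
    (P E C : ℝ) (hP : 0 < P) (hE : 0 < E) (hC : 0 < C)
    (f w : ℝ → ℝ) (hf : ContDiff ℝ (⊤ : ℕ∞) f) (hw : ContDiff ℝ (⊤ : ℕ∞) w)
    (hfP : Function.Periodic f P) (hwP : Function.Periodic w P)
    (hwE : ∀ s : ℝ, E ≤ w s)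
    (hs₀ : ∃ s₀ : ℝ, |f s₀| ≤ C) :
    ∀ s : ℝ, (f s) ^ 2
      ≤ 2 * C ^ 2
        + (2 / E ^ 2) * (∫ x in (0:ℝ)..P, w x)
            * ∫ x in (0:ℝ)..P, (deriv f x) ^ 2 * w x := by
  obtain ⟨s₀, hs₀⟩ := hs₀
  intro s
  have hfd : Differentiable ℝ f := hf.differentiable (by simp)
  have hdc : Continuous (deriv f) := hf.continuous_deriv (by simp)
  have hwc : Continuous w := hw.continuous
  have hdP : Function.Periodic (deriv f) P := by
    intro x
    rw [← deriv_comp_add_const]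
    congr 1
    funext y
    exact hfP y
  have hac : Continuous (fun x => |deriv f x|) := hdc.abs
  obtain ⟨y, hy, hfy⟩ := hfP.exists_mem_Ico hP s s₀
  have h1 : f y - f s₀ = ∫ x in s₀..y, deriv f x :=
    (intervalIntegral.integral_deriv_eq_sub (fun x _ => hfd x)
      (hdc.intervalIntegrable _ _)).symm
  have h2 : |f y - f s₀| ≤ ∫ x in (0:ℝ)..P, |deriv f x| := by
    have haP : Function.Periodic (fun x => |deriv f x|) P := fun x => by
      simp only [hdP x]
    have e := haP.intervalIntegral_add_eq s₀ 0
    rw [zero_add] at e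
    rw [← e, h1]
    refine (intervalIntegral.abs_integral_le_integral_abs hy.1).trans ?_
    refine intervalIntegral.integral_mono_interval le_rfl hy.1 hy.2.le ?_
      (hac.intervalIntegrable _ _)
    exact Filter.Eventually.of_forall fun x => abs_nonneg _
  set I := ∫ x in (0:ℝ)..P, |deriv f x| with hI
  set W := ∫ x in (0:ℝ)..P, w x with hW
  set D := ∫ x in (0:ℝ)..P, (deriv f x) ^ 2 * w x with hD
  have hWpos : 0 < W :=
    intervalIntegral.intervalIntegral_pos_of_pos (hwc.intervalIntegrable _ _)
      (fun x => lt_of_lt_of_le hE (hwE x)) hP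
  have hInn : 0 ≤ I := (abs_nonneg _).trans h2
  obtain ⟨J, hJ⟩ : ∃ J, J = ∫ x in (0:ℝ)..P, |deriv f x| * w x := ⟨_, rfl⟩
  have hEJ : E * I ≤ J := by
    rw [hJ, hI, ← intervalIntegral.integral_const_mul]
    refine intervalIntegral.integral_mono_on hP.le
      ((continuous_const.mul hac).intervalIntegrable _ _)
      ((hac.mul hwc).intervalIntegrable _ _) fun x _ => ?_
    nlinarith [hwE x, abs_nonneg (deriv f x)]
  have hq : ∀ t : ℝ, 0 ≤ D - 2 * t * J + t ^ 2 * W := by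
    intro t
    have e : D - 2 * t * J + t ^ 2 * W
        = ∫ x in (0:ℝ)..P, (|deriv f x| - t) ^ 2 * w x := by
      rw [hD, hJ, hW, ← intervalIntegral.integral_const_mul,
        ← intervalIntegral.integral_const_mul, ← intervalIntegral.integral_sub,
        ← intervalIntegral.integral_add]
      · refine intervalIntegral.integral_congr fun x _ => ?_
        rw [← sq_abs (deriv f x)]
        ring
      all_goals exact Continuous.intervalIntegrable (by fun_prop) _ _
    rw [e]
    exact intervalIntegral.integral_nonneg hP.le fun x _ =>
      mul_nonneg (sq_nonneg _) (hE.le.trans (hwE x))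
  have hJWD : J ^ 2 ≤ W * D := by
    have h := hq (J / W)
    have h' : W * (D - 2 * (J / W) * J + (J / W) ^ 2 * W) = W * D - J ^ 2 := by
      field_simp
      ring
    nlinarith [mul_nonneg hWpos.le h]
  have hIWD : I ^ 2 ≤ W * D / E ^ 2 := by
    rw [le_div_iff₀ (by positivity)]
    nlinarith [mul_nonneg hE.le hInn]
  have e : 2 / E ^ 2 * W * D = 2 * (W * D / E ^ 2) := by ring
  rw [e, hfy]
  have a1 : f s₀ ^ 2 ≤ C ^ 2 := sq_le_sq' (abs_le.1 hs₀).1 (abs_le.1 hs₀).2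
  have a2 : (f y - f s₀) ^ 2 ≤ I ^ 2 := sq_le_sq' (abs_le.1 h2).1 (abs_le.1 h2).2
  nlinarith [sq_nonneg (f y - 2 * f s₀)]
end
end
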